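/- For every integer m ≥ 1, the 2-alternating assignment with m blocks on the 1×(2m+1) strip of stamps folds in exactly C_{⌊m/2⌋+1} · C_{⌈m/2⌉+1} ways, where C_i denotes the i-th Catalan number; that is, the number of valid layer orderings for this assignment equals C_{⌊m/2⌋+1} · C_{⌈m/2⌉+1}. -/

import Mathlib

/-- A crease direction: mountain or valley. -/
inductive MV : Type
  | M : MV
  | V : MV
deriving DecidableEq

/-- The value `σ(i)` of a layer ordering at face `i`, as a natural number
(`0` if `i` is out of range). -/
def faceVal {n : ℕ} (σ : Equiv.Perm (Fin n)) (i : ℕ) : ℕ :=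
  if h : i < n then (σ ⟨i, h⟩ : Fin n) else 0

/-- Condition (1): the layer ordering respects the mountain–valley assignment. -/
def MVRelations (n : ℕ) (μ : ℕ → MV) (σ : Equiv.Perm (Fin n)) : Prop :=
  ∀ i, i + 1 < n →
    if (μ i = MV.M ∧ Even i) ∨ (μ i = MV.V ∧ Odd i)
    then faceVal σ (i + 1) < faceVal σ i
    else faceVal σ i < faceVal σ (i + 1)

/-- `x` lies strictly between `lo` and `hi` (in either order). -/
def StrictlyBetween (x a b : ℕ) : Prop := min a b < x ∧ x < max a b

/-- Condition (2): no two creases on the same side cross. -/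
def NoCrossings (n : ℕ) (σ : Equiv.Perm (Fin n)) : Prop :=
  ∀ i j, i + 1 < n → j + 1 < n → i % 2 = j % 2 →
    ¬ Xor' (StrictlyBetween (faceVal σ j) (faceVal σ i) (faceVal σ (i + 1)))
           (StrictlyBetween (faceVal σ (j + 1)) (faceVal σ i) (faceVal σ (i + 1)))

/-- A valid layer ordering for the MV assignment `μ` on the `1 × n` strip. -/
def ValidLayerOrdering (n : ℕ) (μ : ℕ → MV) (σ : Equiv.Perm (Fin n)) : Prop :=
  MVRelations n μ σ ∧ NoCrossings n σ

/-- `c(μ)`: the number of valid layer orderings for `μ` on the `1 × n` strip. -/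
noncomputable def foldCount (n : ℕ) (μ : ℕ → MV) : ℕ :=
  Nat.card {σ : Equiv.Perm (Fin n) // ValidLayerOrdering n μ σ}

/-- The 2-alternating assignment: crease `(k,k+1)` is `M` if `⌊k/2⌋` is even, `V` otherwise. -/
def twoAlt : ℕ → MV := fun k => if Even (k / 2) then MV.M else MV.V

/-!
Record a folded state by the list of its faces from bottom to top, turned upside down if necessary
so that the next crease `2m` goes down and crease `2m + 1` goes up, and cut it just below its last
face `2m`.

Face `2m + 1` has to lie immediately below face `2m`. Indeed, no crease `(2j, 2j + 1)` may leave
the set of faces in between; if that set were nonempty, its topmost face would be some `2j`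
whose crease goes up, so that `2j + 1` would lie above it. Face `2m + 2` then lies
above an initial segment of the upper part which no odd crease leaves, that is, above some number
`i` of the irreducible blocks of the upper part. Turning the result upside down, `a` upper and `b`
lower blocks become `b + 1` upper and `a - i` lower blocks, with `0 ≤ i ≤ a` arbitrary. The levels
of this generating tree are counted by products of two coefficients of powers of the Catalan series
`c`, because `c ^ (p + 1) = X * c ^ (p + 2) + c ^ p`.
-/

namespace StampFolding

/-! ### Positions in lists -/

section ListLemmas

variable {α : Type*}

theorem eq_and_eq_of_append_cons_eq {A B C D : List α} {a : α} (h : (A ++ a :: B).Nodup)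
    (heq : C ++ a :: D = A ++ a :: B) : C = A ∧ D = B := by
  have hnot := (List.nodup_middle.1 h).notMem
  rw [List.mem_append, not_or] at hnot
  obtain ⟨hAC, -, hBD⟩ := (List.append_cons_inj_of_notMem hnot.1 hnot.2).1 heq.symm
  exact ⟨hAC.symm, hBD.symm⟩

variable [DecidableEq α]

theorem idxOf_append_cons_of_ne {a x : α} (h : x ≠ a) (A B : List α) :
    (A ++ a :: B).idxOf x =
      (A ++ B).idxOf x + if (A ++ B).idxOf x < A.length then 0 else 1 := by
  by_cases hx : x ∈ A
  · have := List.idxOf_lt_length_of_mem hx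
    simp [List.idxOf_append_of_mem hx, this]
  · rw [List.idxOf_append_of_notMem hx, List.idxOf_append_of_notMem hx,
      List.idxOf_cons_ne _ h.symm, if_neg (by omega), Nat.add_assoc]

theorem idxOf_append_cons_lt_iff {a x y : α} (hx : x ≠ a) (hy : y ≠ a) (A B : List α) :
    (A ++ a :: B).idxOf x < (A ++ a :: B).idxOf y ↔ (A ++ B).idxOf x < (A ++ B).idxOf y := by
  rw [idxOf_append_cons_of_ne hx, idxOf_append_cons_of_ne hy]
  split_ifs <;> omega

theorem idxOf_reverse_lt_iff {l : List α} (hl : l.Nodup) {x y : α} (hx : x ∈ l) (hy : y ∈ l) :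
    l.reverse.idxOf x < l.reverse.idxOf y ↔ l.idxOf y < l.idxOf x := by
  have reverse_idxOf : ∀ z ∈ l, l.reverse.idxOf z = l.length - 1 - l.idxOf z := fun z hz => by
    have hlt := List.idxOf_lt_length_of_mem hz
    have hget := (List.nodup_reverse.2 hl).idxOf_getElem (l.length - 1 - l.idxOf z)
      (by rw [List.length_reverse]; omega)
    simpa only [List.getElem_reverse, Nat.sub_sub_self (Nat.le_sub_one_of_lt hlt),
      List.getElem_idxOf] using hget
  have := List.idxOf_lt_length_of_mem hx
  have := List.idxOf_lt_length_of_mem hy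
  rw [reverse_idxOf x hx, reverse_idxOf y hy]
  omega

theorem strictlyBetween_idxOf_iff_mem {A B C : List α} {a b : α}
    (h : (A ++ a :: B ++ b :: C).Nodup) (x : α) :
    StrictlyBetween ((A ++ a :: B ++ b :: C).idxOf x) ((A ++ a :: B ++ b :: C).idxOf a)
      ((A ++ a :: B ++ b :: C).idxOf b) ↔ x ∈ B := by
  have ha : (A ++ a :: B ++ b :: C).idxOf a = A.length := by
    have : a ∉ A := by grind
    simp [List.idxOf_append_of_notMem this]
  have hb : (A ++ a :: B ++ b :: C).idxOf b = A.length + 1 + B.length := by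
    have : b ∉ A ++ a :: B := by grind
    rw [List.idxOf_append_of_notMem this, List.idxOf_cons_self, List.length_append,
      List.length_cons, Nat.add_zero, Nat.add_assoc, Nat.add_comm 1]
  have hAB : x ∈ A ++ a :: B ↔ (A ++ a :: B ++ b :: C).idxOf x < A.length + 1 + B.length := by
    rw [(List.prefix_append (A ++ a :: B) (b :: C)).mem_iff_idxOf_lt_length, List.length_append,
      List.length_cons, Nat.add_assoc, Nat.add_comm 1]
  have hA : x ∈ A ++ [a] ↔ (A ++ a :: B ++ b :: C).idxOf x < A.length + 1 := by
    have hinit : A ++ [a] <+: A ++ a :: B ++ b :: C := ⟨B ++ b :: C, by simp⟩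
    rw [hinit.mem_iff_idxOf_lt_length, List.length_append, List.length_singleton]
  have : x ∈ B ↔ x ∈ A ++ a :: B ∧ x ∉ A ++ [a] := by grind
  rw [ha, hb, this, hAB, hA, StrictlyBetween]
  omega

theorem idxOf_lt_idxOf_of_nodup {A B C : List α} {a b : α}
    (h : (A ++ a :: B ++ b :: C).Nodup) :
    (A ++ a :: B ++ b :: C).idxOf a < (A ++ a :: B ++ b :: C).idxOf b := by
  have hb : b ∉ A ++ a :: B := fun hb => List.disjoint_of_nodup_append h hb List.mem_cons_self
  have ha : a ∈ A ++ a :: B := List.mem_append_right A List.mem_cons_self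
  rw [List.idxOf_append_of_notMem hb, List.idxOf_append_of_mem ha]
  exact (List.idxOf_lt_length_of_mem ha).trans_le (Nat.le_add_right _ _)

theorem exists_eq_append_cons_append_cons {l : List α} {a b : α} (hb : b ∈ l)
    (h : l.idxOf a < l.idxOf b) : ∃ A B C, l = A ++ a :: B ++ b :: C := by
  have ha : a ∈ l := List.idxOf_lt_length_iff.1 (h.trans (List.idxOf_lt_length_of_mem hb))
  obtain ⟨A, R, rfl, haA⟩ := List.eq_append_cons_of_mem ha
  have hbR : b ∈ R := by
    by_contra hbR
    grind
  obtain ⟨B, C, rfl⟩ := List.append_of_mem hbR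
  exact ⟨A, B, C, by simp⟩

end ListLemmas

theorem append_cons_perm_range_iff {n : ℕ} {A B : List ℕ} :
    (A ++ n :: B).Perm (List.range (n + 1)) ↔ (A ++ B).Perm (List.range n) := by
  have hrange : (List.range (n + 1)).Perm (n :: List.range n) := by
    rw [List.range_succ]
    exact List.perm_append_comm
  rw [hrange.congr_right, List.perm_middle.congr_left, List.perm_cons]

/-! ### Layerings and stacks -/

theorem strictlyBetween_iff {x a b : ℕ} :
    StrictlyBetween x a b ↔ a < x ∧ x < b ∨ b < x ∧ x < a := by
  rw [StrictlyBetween]; omega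

/-- `f` assigns heights to the faces `0, …, n - 1` of a strip so that the creases `k` with `d k`
go down, the others go up, and no two creases of the same parity cross. This is the notion of a
valid layer ordering with the mountain–valley data reduced to the predicate `d`; only the relative
order of the values of `f` below `n` matters. -/
structure IsLayering (n : ℕ) (d : ℕ → Prop) (f : ℕ → ℕ) : Prop where
  down : ∀ k, k + 1 < n → d k → f (k + 1) < f k
  up : ∀ k, k + 1 < n → ¬ d k → f k < f (k + 1)
  noCrossing : ∀ i j, i + 1 < n → j + 1 < n → i % 2 = j % 2 →
    (StrictlyBetween (f j) (f i) (f (i + 1)) ↔ StrictlyBetween (f (j + 1)) (f i) (f (i + 1)))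

namespace IsLayering

variable {n : ℕ} {d d' : ℕ → Prop} {f g : ℕ → ℕ}

theorem congr (h : IsLayering n d f) (hfg : ∀ x < n, ∀ y < n, (f x < f y ↔ g x < g y)) :
    IsLayering n d g where
  down k hk hd := (hfg _ (by omega) _ (by omega)).1 (h.down k hk hd)
  up k hk hd := (hfg _ (by omega) _ (by omega)).1 (h.up k hk hd)
  noCrossing i j hi hj hij := by
    have := h.noCrossing i j hi hj hij
    simp (disch := omega) only [strictlyBetween_iff, hfg] at this ⊢
    exact this

theorem reverse (h : IsLayering n d f) (hd : ∀ k, d' k ↔ ¬ d k)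
    (hfg : ∀ x < n, ∀ y < n, (f x < f y ↔ g y < g x)) : IsLayering n d' g where
  down k hk hd' := (hfg _ (by omega) _ (by omega)).1 (h.up k hk ((hd k).1 hd'))
  up k hk hd' := (hfg _ (by omega) _ (by omega)).1 (h.down k hk (by have := hd k; tauto))
  noCrossing i j hi hj hij := by
    have := h.noCrossing i j hi hj hij
    simp (disch := omega) only [strictlyBetween_iff, hfg] at this ⊢
    tauto

theorem succ_iff (hf : Set.InjOn f (Set.Iio (n + 2))) :
    IsLayering (n + 2) d f ↔ IsLayering (n + 1) d f ∧
      ((d n → f (n + 1) < f n) ∧ (¬ d n → f n < f (n + 1))) ∧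
      ∀ i < n, i % 2 = n % 2 →
        (StrictlyBetween (f i) (f n) (f (n + 1)) ↔
          StrictlyBetween (f (i + 1)) (f n) (f (n + 1))) := by
  constructor
  · intro h
    exact ⟨⟨fun k hk => h.down k (by omega), fun k hk => h.up k (by omega),
      fun i j hi hj => h.noCrossing i j (by omega) (by omega)⟩,
      ⟨h.down n (by omega), h.up n (by omega)⟩,
      fun i hi hin => h.noCrossing n i (by omega) (by omega) hin.symm⟩
  · rintro ⟨h, ⟨hdown, hup⟩, hnc⟩
    refine ⟨fun k hk => ?_, fun k hk => ?_, fun i j hi hj hij => ?_⟩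
    · obtain rfl | hk := eq_or_ne k n
      exacts [hdown, h.down k (by omega)]
    · obtain rfl | hk := eq_or_ne k n
      exacts [hup, h.up k (by omega)]
    · have ne : ∀ x y, x < n + 2 → y < n + 2 → x ≠ y → f x ≠ f y := fun x y hx hy hxy he =>
        hxy (hf hx hy he)
      rcases eq_or_ne i n with rfl | hin <;> rcases eq_or_ne j i with rfl | hji
      · simp only [StrictlyBetween]; omega
      · exact hnc j (by omega) hij.symm
      · simp only [StrictlyBetween]; omega
      rcases eq_or_ne j n with rfl | hjn
      · have := hnc i (by omega) hij
        have := ne i j (by omega) (by omega) (by omega)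
        have := ne i (j + 1) (by omega) (by omega) (by omega)
        have := ne (i + 1) j (by omega) (by omega) (by omega)
        have := ne (i + 1) (j + 1) (by omega) (by omega) (by omega)
        simp only [strictlyBetween_iff] at *
        omega
      · exact h.noCrossing i j (by omega) (by omega) hij

end IsLayering

/-- The list `l` is a folded state of the strip with faces `0, …, n - 1` and down-going creases `d`,
listing the faces from bottom to top. -/
structure IsStack (n : ℕ) (d : ℕ → Prop) (l : List ℕ) : Prop where
  perm : l.Perm (List.range n)
  isLayering : IsLayering n d fun x => l.idxOf x

/-- The set of faces in `B` is a union of creases `(i, i + 1)` with `i` of the parity of `s` and of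
faces lying on no such crease: none of these creases leaves `B`. This is what the non-crossing
condition says about the faces lying between the two faces of a crease. -/
def CreaseClosed (s : ℕ) (B : List ℕ) : Prop :=
  ∀ i, i % 2 = s % 2 → (i ∈ B ↔ i + 1 ∈ B)

namespace CreaseClosed

variable {s t : ℕ} {A B : List ℕ}

theorem nil (s : ℕ) : CreaseClosed s [] := fun i _ => by simp

theorem congr_parity (hst : s % 2 = t % 2) : CreaseClosed s B ↔ CreaseClosed t B := by
  rw [CreaseClosed, CreaseClosed, hst]

theorem reverse_iff : CreaseClosed s B.reverse ↔ CreaseClosed s B := by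
  simp only [CreaseClosed, List.mem_reverse]

theorem of_append (hd : A.Disjoint B) (hA : CreaseClosed s A) (hAB : CreaseClosed s (A ++ B)) :
    CreaseClosed s B := fun i hi => by
  have := hA i hi
  have := hAB i hi
  have := @hd i
  have := @hd (i + 1)
  simp only [List.mem_append] at *
  tauto

theorem flatten {S : List (List ℕ)} (h : ∀ b ∈ S, CreaseClosed s b) :
    CreaseClosed s S.flatten := fun i hi => by
  simp only [List.mem_flatten]
  exact exists_congr fun b => and_congr_right fun hb => h b hb i hi

theorem iff_of_forall_lt {n : ℕ} (h : ∀ x ∈ B, x < n) :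
    CreaseClosed s B ↔ ∀ i < n, i % 2 = s % 2 → (i ∈ B ↔ i + 1 ∈ B) := by
  refine ⟨fun hB i _ => hB i, fun hB i hi => ?_⟩
  by_cases hin : i < n
  · exact hB i hin hi
  · exact iff_of_false (fun hiB => hin (h i hiB)) fun hiB => hin (by have := h _ hiB; omega)

end CreaseClosed

namespace IsStack

variable {n : ℕ} {d d' : ℕ → Prop} {l A B C : List ℕ}

theorem nodup (h : IsStack n d l) : l.Nodup := h.perm.nodup_iff.2 List.nodup_range

theorem mem_iff (h : IsStack n d l) {x : ℕ} : x ∈ l ↔ x < n := by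
  rw [h.perm.mem_iff, List.mem_range]

theorem reverse (h : IsStack n d l) (hd : ∀ k, d' k ↔ ¬ d k) : IsStack n d' l.reverse where
  perm := l.reverse_perm.trans h.perm
  isLayering := h.isLayering.reverse hd fun _ hx _ hy =>
    (idxOf_reverse_lt_iff h.nodup (h.mem_iff.2 hy) (h.mem_iff.2 hx)).symm

theorem isLayering_insert_above_iff
    (hp : (A ++ n :: B ++ (n + 1) :: C).Perm (List.range (n + 2))) :
    IsLayering (n + 2) d (fun x => (A ++ n :: B ++ (n + 1) :: C).idxOf x) ↔
      IsLayering (n + 1) d (fun x => (A ++ n :: B ++ C).idxOf x) ∧ ¬ d n ∧ CreaseClosed n B := by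
  have hnodup := hp.nodup_iff.2 List.nodup_range
  have hmem : ∀ x, x ∈ A ++ n :: B ++ (n + 1) :: C ↔ x < n + 2 := fun x => by
    rw [hp.mem_iff, List.mem_range]
  have hB : ∀ x ∈ B, x < n := fun x hx => by
    have hlt : x < n + 2 := (hmem x).1 (by simp [hx])
    have hn : x ≠ n := by
      rintro rfl
      simp [List.nodup_append, hx] at hnodup
    have hn' : x ≠ n + 1 := by
      rintro rfl
      exact List.disjoint_of_nodup_append hnodup (by simp [hx]) List.mem_cons_self
    omega
  have hinj : Set.InjOn (fun x => (A ++ n :: B ++ (n + 1) :: C).idxOf x) (Set.Iio (n + 2)) :=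
    fun x hx y _ hxy => (List.idxOf_inj ((hmem x).2 hx)).1 hxy
  have horder : ∀ x < n + 1, ∀ y < n + 1,
      ((A ++ n :: B ++ (n + 1) :: C).idxOf x < (A ++ n :: B ++ (n + 1) :: C).idxOf y ↔
        (A ++ n :: B ++ C).idxOf x < (A ++ n :: B ++ C).idxOf y) := fun x hx y hy =>
    idxOf_append_cons_lt_iff (by omega) (by omega) _ _
  have hup := idxOf_lt_idxOf_of_nodup hnodup
  rw [IsLayering.succ_iff hinj, CreaseClosed.iff_of_forall_lt hB]
  simp only [strictlyBetween_idxOf_iff_mem hnodup]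
  refine and_congr
    ⟨fun h => h.congr horder, fun h => h.congr fun x hx y hy => (horder x hx y hy).symm⟩
    (and_congr_left'
      ⟨fun h hd => hup.asymm (h.1 hd), fun h => ⟨fun hd => absurd hd h, fun _ => hup⟩⟩)

theorem insert_above_iff :
    IsStack (n + 2) d (A ++ n :: B ++ (n + 1) :: C) ↔
      IsStack (n + 1) d (A ++ n :: B ++ C) ∧ ¬ d n ∧ CreaseClosed n B := by
  constructor
  · rintro ⟨hp, hl⟩
    obtain ⟨hl', h⟩ := (isLayering_insert_above_iff hp).1 hl
    exact ⟨⟨append_cons_perm_range_iff.1 hp, hl'⟩, h⟩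
  · rintro ⟨⟨hp, hl⟩, h⟩
    have hp' := append_cons_perm_range_iff.2 hp
    exact ⟨hp', (isLayering_insert_above_iff hp').2 ⟨hl, h⟩⟩

theorem insert_below_iff :
    IsStack (n + 2) d (A ++ (n + 1) :: B ++ n :: C) ↔
      IsStack (n + 1) d (A ++ B ++ n :: C) ∧ d n ∧ CreaseClosed n B := by
  have reverse_iff : ∀ {n l}, IsStack n d l ↔ IsStack n (fun k => ¬ d k) l.reverse := fun {n l} =>
    ⟨fun h => h.reverse fun _ => Iff.rfl, fun h => by
      simpa only [List.reverse_reverse] using h.reverse (d' := d) fun _ => not_not.symm⟩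
  have := insert_above_iff (n := n) (d := fun k => ¬ d k) (A := C.reverse) (B := B.reverse)
    (C := A.reverse)
  rw [not_not, CreaseClosed.reverse_iff] at this
  rw [reverse_iff, reverse_iff (n := n + 1)]
  simpa using this

theorem exists_insert_above (h : IsStack (n + 2) d l) (hd : ¬ d n) :
    ∃ A B C, l = A ++ n :: B ++ (n + 1) :: C :=
  exists_eq_append_cons_append_cons (h.mem_iff.2 (by omega)) (h.isLayering.up n (by omega) hd)

theorem exists_insert_below (h : IsStack (n + 2) d l) (hd : d n) :
    ∃ A B C, l = A ++ (n + 1) :: B ++ n :: C :=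
  exists_eq_append_cons_append_cons (h.mem_iff.2 (by omega)) (h.isLayering.down n (by omega) hd)

end IsStack

/-! ### Blocks -/

/-- A block is an irreducible crease-closed list: nonempty, and its only nonempty
crease-closed initial segment is the whole list. A repetition-free crease-closed list decomposes
uniquely into blocks. -/
structure IsBlock (s : ℕ) (b : List ℕ) : Prop where
  ne_nil : b ≠ []
  closed : CreaseClosed s b
  prefix_minimal : ∀ A, A <+: b → A ≠ [] → CreaseClosed s A → A = b

namespace IsBlock

variable {s : ℕ} {B : List ℕ} {S T : List (List ℕ)}

theorem singleton {x : ℕ} (h : CreaseClosed s [x]) : IsBlock s [x] where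
  ne_nil := List.cons_ne_nil _ _
  closed := h
  prefix_minimal _ hA hne _ := hA.eq_of_length_le (List.length_pos_iff.2 hne)

theorem wrap {i : ℕ} (hi : i % 2 = s % 2) (hB : CreaseClosed s B) (h : i ∉ B) :
    IsBlock s ((i + 1) :: B ++ [i]) where
  ne_nil := List.cons_ne_nil _ _
  closed j hj := by
    have hj₁ : j ≠ i + 1 := by omega
    have hj₂ : j + 1 ≠ i := by omega
    simp [hB j hj, hj₁, hj₂, or_comm]
  prefix_minimal A hA hne hclosed := by
    refine (List.prefix_concat_iff.1 hA).resolve_right fun hA' => ?_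
    obtain ⟨x, A', rfl⟩ := List.exists_cons_of_ne_nil hne
    obtain rfl : x = i + 1 := (List.cons_prefix_cons.1 hA').1
    have hiA : i ∈ (i + 1) :: A' := (hclosed i hi).2 List.mem_cons_self
    exact h (List.mem_of_ne_of_mem (Nat.succ_ne_self i).symm (hA'.subset hiA))

theorem flatten_inj (hS : ∀ b ∈ S, IsBlock s b) (hT : ∀ b ∈ T, IsBlock s b)
    (h : S.flatten = T.flatten) : S = T := by
  induction S generalizing T with
  | nil =>
    refine (List.eq_nil_iff_forall_not_mem.2 fun b hb => (hT b hb).ne_nil ?_).symm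
    exact List.flatten_eq_nil_iff.1 h.symm b hb
  | cons b S ih =>
    have hb := hS b List.mem_cons_self
    cases T with
    | nil => exact absurd (List.flatten_eq_nil_iff.1 h b List.mem_cons_self) hb.ne_nil
    | cons c T =>
      have hc := hT c List.mem_cons_self
      rw [List.flatten_cons, List.flatten_cons] at h
      obtain rfl : b = c := by
        have hbp : b <+: c ++ T.flatten := ⟨_, h⟩
        have hcp : c <+: c ++ T.flatten := List.prefix_append c _
        rcases le_total b.length c.length with hle | hle
        · exact hc.prefix_minimal b (List.prefix_of_prefix_length_le hbp hcp hle) hb.ne_nil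
            hb.closed
        · exact (hb.prefix_minimal c (List.prefix_of_prefix_length_le hcp hbp hle) hc.ne_nil
            hc.closed).symm
      rw [ih (fun x hx => hS x (List.mem_cons_of_mem _ hx))
        (fun x hx => hT x (List.mem_cons_of_mem _ hx)) (List.append_cancel_left h)]

theorem exists_eq_flatten_take (hS : ∀ b ∈ S, IsBlock s b) (hnodup : S.flatten.Nodup)
    (hB : B <+: S.flatten) (hclosed : CreaseClosed s B) :
    ∃ i ≤ S.length, B = (S.take i).flatten := by
  induction S generalizing B with
  | nil => exact ⟨0, le_rfl, List.prefix_nil.1 hB⟩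
  | cons b S ih =>
    rcases eq_or_ne B [] with rfl | hne
    · exact ⟨0, Nat.zero_le _, rfl⟩
    have hb := hS b List.mem_cons_self
    rw [List.flatten_cons] at hB hnodup
    have hbp : b <+: b ++ S.flatten := List.prefix_append b _
    rcases le_total B.length b.length with hle | hle
    · have hBb := hb.prefix_minimal B (List.prefix_of_prefix_length_le hB hbp hle) hne hclosed
      exact ⟨1, by simp, by simpa using hBb⟩
    · obtain ⟨B', rfl⟩ := List.prefix_of_prefix_length_le hbp hB hle
      have hB' : B' <+: S.flatten := (List.prefix_append_right_inj b).1 hB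
      have hdisj : b.Disjoint B' := fun x hx hx' =>
        List.disjoint_of_nodup_append hnodup hx (hB'.subset hx')
      obtain ⟨i, hi, rfl⟩ := ih (fun x hx => hS x (List.mem_cons_of_mem _ hx))
        (List.nodup_append.1 hnodup).2.1 hB' (hb.closed.of_append hdisj hclosed)
      exact ⟨i + 1, by simpa using hi, by simp⟩

end IsBlock

/-! ### The generating tree -/

/-- The creases going down in a folded state of the 2-alternating strip with `m` blocks, turned
upside down if `m` is odd. With this orientation crease `2 * m`, the next one, goes down. -/
def Descends (m k : ℕ) : Prop := Even ((k + 1) / 2 + m)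

theorem descends_succ (m k : ℕ) : Descends (m + 1) k ↔ ¬ Descends m k := by
  rw [Descends, Descends, ← Nat.add_assoc, Nat.even_add_one]

theorem descends_two_mul (m : ℕ) : Descends m (2 * m) :=
  ⟨m, by omega⟩

theorem not_descends_two_mul_add_one (m : ℕ) : ¬ Descends m (2 * m + 1) := by
  rw [Descends, Nat.even_iff]; omega

theorem not_descends_two_mul {m j : ℕ} (h : Odd (j + m)) : ¬ Descends m (2 * j) := by
  rw [Nat.odd_iff] at h
  rw [Descends, Nat.even_iff]; omega

theorem IsStack.exists_remove_two_faces {m : ℕ} {l : List ℕ}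
    (h : IsStack (2 * m + 3) (Descends m) l) :
    ∃ A B C, l = A ++ (2 * m + 1) :: B ++ (2 * m + 2) :: C ∧ CreaseClosed 1 B ∧
      ∃ A' D, B ++ C = A' ++ 2 * m :: D ∧ CreaseClosed 0 A' ∧
        IsStack (2 * m + 1) (Descends m) (A ++ A' ++ 2 * m :: D) := by
  obtain ⟨A, B, C, rfl⟩ := h.exists_insert_above (not_descends_two_mul_add_one m)
  obtain ⟨h', -, hB⟩ := insert_above_iff.1 h
  obtain ⟨_, A', D, heq⟩ := h'.exists_insert_below (descends_two_mul m)
  have hnodup := h'.nodup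
  rw [heq] at h'
  obtain ⟨hstack, -, hA'⟩ := insert_below_iff.1 h'
  rw [List.append_assoc, List.cons_append] at heq hnodup
  rw [List.append_assoc, List.cons_append] at heq
  obtain ⟨rfl, heq'⟩ := eq_and_eq_of_append_cons_eq hnodup heq.symm
  exact ⟨_, B, C, rfl, (CreaseClosed.congr_parity (by omega)).1 hB, A', D, heq'.symm,
    (CreaseClosed.congr_parity (by omega)).1 hA', hstack⟩

/-- A folded state cut below its last face into two parts, each given by its decomposition into
blocks. Both parts are read from the cut outwards: `lower` from top to bottom, `upper` from bottom
to top. -/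
@[ext]
structure BlockStack where
  lower : List (List ℕ)
  upper : List (List ℕ)
deriving DecidableEq

namespace BlockStack

/-- The faces of a block stack, from bottom to top. -/
def layers (s : BlockStack) : List ℕ := s.lower.flatten.reverse ++ s.upper.flatten

/-- The block stack obtained from a folded state of `2 * m + 1` faces by inserting face `2 * m + 1`
directly below face `2 * m` and face `2 * m + 2` above the first `i` upper blocks, and then turning
everything upside down. -/
def extend (m : ℕ) (s : BlockStack) (i : ℕ) : BlockStack where
  lower := s.upper.drop i
  upper := ((2 * m + 2) :: (s.upper.take i).flatten.reverse ++ [2 * m + 1]) :: s.lower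

/-- The block stacks generated by `extend` from the single-face strip; they represent the folded
states with `2 * m + 1` faces. -/
def family : ℕ → Finset BlockStack
  | 0 => {⟨[], [[0]]⟩}
  | m + 1 => ((family m).sigma fun s => Finset.range (s.upper.length + 1)).image
      fun p => p.1.extend m p.2

/-- The invariants of the members of `family m`. Every block starts with an even face `2 * j`, and
the parity of `j + m` tells whether crease `2 * j` goes down or up. -/
structure IsAdmissible (m : ℕ) (s : BlockStack) : Prop where
  isStack : IsStack (2 * m + 1) (Descends m) s.layers
  isBlock_upper : ∀ b ∈ s.upper, IsBlock 1 b
  isBlock_lower : ∀ b ∈ s.lower, IsBlock 1 b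
  upper_eq_cons : ∃ U, s.upper.flatten = 2 * m :: U
  head_upper : ∀ b ∈ s.upper, ∃ j c, b = 2 * j :: c ∧ Even (j + m)
  head_lower : ∀ b ∈ s.lower, ∃ j c, b = 2 * j :: c ∧ Odd (j + m)

namespace IsAdmissible

variable {m : ℕ} {s t : BlockStack}

theorem zero : IsAdmissible 0 ⟨[], [[0]]⟩ where
  isStack := ⟨List.Perm.refl _, by omega, by omega, by omega⟩
  isBlock_upper := List.forall_mem_singleton.2 <| .singleton fun i hi => by
    rw [List.mem_singleton, List.mem_singleton]
    omega
  isBlock_lower := by simp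
  upper_eq_cons := ⟨[], rfl⟩
  head_upper := by simp
  head_lower := by simp

theorem closed_take (h : IsAdmissible m s) (i : ℕ) :
    CreaseClosed 1 (s.upper.take i).flatten :=
  .flatten fun b hb => (h.isBlock_upper b (List.mem_of_mem_take hb)).closed

theorem isStack_extend (h : IsAdmissible m s) (i : ℕ) :
    IsStack (2 * m + 3) (Descends (m + 1)) (s.extend m i).layers := by
  obtain ⟨U, hU⟩ := h.upper_eq_cons
  have hbelow : IsStack (2 * m + 2) (Descends m)
      (s.lower.flatten.reverse ++ (2 * m + 1) :: [] ++ 2 * m :: U) := by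
    refine IsStack.insert_below_iff.2 ⟨?_, descends_two_mul m, .nil _⟩
    simpa only [List.append_nil, layers, hU] using h.isStack
  have habove : IsStack (2 * m + 3) (Descends m) (s.lower.flatten.reverse ++
      (2 * m + 1) :: (s.upper.take i).flatten ++ (2 * m + 2) :: (s.upper.drop i).flatten) := by
    refine IsStack.insert_above_iff.2 ⟨?_, not_descends_two_mul_add_one m,
      (CreaseClosed.congr_parity (by omega)).2 (h.closed_take i)⟩
    rw [List.append_assoc, List.cons_append, ← List.flatten_append, List.take_append_drop, hU]
    simpa using hbelow
  simpa [layers, extend] using habove.reverse (descends_succ m)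

theorem extend (h : IsAdmissible m s) (i : ℕ) : IsAdmissible (m + 1) (s.extend m i) where
  isStack := h.isStack_extend i
  isBlock_upper := by
    have hnotMem : 2 * m + 1 ∉ (s.upper.take i).flatten.reverse := fun hmem => by
      have hlt := h.isStack.mem_iff.1 (List.mem_append_right s.lower.flatten.reverse
        ((List.take_sublist i s.upper).flatten.subset (List.mem_reverse.1 hmem)))
      omega
    exact List.forall_mem_cons.2 ⟨.wrap (by omega)
      (CreaseClosed.reverse_iff.2 (h.closed_take i)) hnotMem, h.isBlock_lower⟩
  isBlock_lower b hb := h.isBlock_upper b (List.mem_of_mem_drop hb)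
  upper_eq_cons := ⟨_, rfl⟩
  head_upper := by
    refine List.forall_mem_cons.2 ⟨⟨m + 1, _, rfl, m + 1, rfl⟩, fun b hb => ?_⟩
    obtain ⟨j, c, rfl, hj⟩ := h.head_lower b hb
    exact ⟨j, c, rfl, hj.add_one⟩
  head_lower b hb := by
    obtain ⟨j, c, rfl, hj⟩ := h.head_upper b (List.mem_of_mem_drop hb)
    exact ⟨j, c, rfl, hj.add_one⟩

theorem of_mem_family (h : s ∈ family m) : IsAdmissible m s := by
  induction m generalizing s with
  | zero =>
    obtain rfl := Finset.mem_singleton.1 h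
    exact zero
  | succ m ih =>
    obtain ⟨⟨t, i⟩, hti, rfl⟩ := Finset.mem_image.1 h
    exact (ih (Finset.mem_sigma.1 hti).1).extend i

theorem nodup_upper (h : IsAdmissible m s) : s.upper.flatten.Nodup :=
  (List.nodup_append.1 h.isStack.nodup).2.1

theorem eq_of_append_cons_eq_layers (h : IsAdmissible m s) {A D : List ℕ}
    (heq : A ++ 2 * m :: D = s.layers) :
    A = s.lower.flatten.reverse ∧ 2 * m :: D = s.upper.flatten := by
  obtain ⟨U, hU⟩ := h.upper_eq_cons
  have hnodup := h.isStack.nodup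
  rw [layers, hU] at heq hnodup
  obtain ⟨rfl, rfl⟩ := eq_and_eq_of_append_cons_eq hnodup heq
  exact ⟨rfl, hU.symm⟩

theorem eq_of_layers_eq (hs : IsAdmissible m s) (ht : IsAdmissible m t)
    (h : s.layers = t.layers) : s = t := by
  obtain ⟨U, hU⟩ := hs.upper_eq_cons
  obtain ⟨hlower, hupper⟩ := ht.eq_of_append_cons_eq_layers (by rw [← hU]; exact h)
  rw [← hU] at hupper
  have hl := IsBlock.flatten_inj hs.isBlock_lower ht.isBlock_lower (List.reverse_inj.1 hlower)
  have hu := IsBlock.flatten_inj hs.isBlock_upper ht.isBlock_upper hupper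
  exact BlockStack.ext hl hu

theorem eq_of_extend_eq (hs : IsAdmissible m s) (ht : IsAdmissible m t) {i j : ℕ}
    (hi : i ≤ s.upper.length) (hj : j ≤ t.upper.length) (h : s.extend m i = t.extend m j) :
    s = t ∧ i = j := by
  obtain ⟨hdrop, hupper⟩ := BlockStack.mk.inj h
  obtain ⟨hblock, hlower⟩ := List.cons.inj hupper
  have htake : s.upper.take i = t.upper.take j := by
    refine IsBlock.flatten_inj (fun b hb => hs.isBlock_upper b (List.mem_of_mem_take hb))
      (fun b hb => ht.isBlock_upper b (List.mem_of_mem_take hb)) (List.reverse_inj.1 ?_)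
    exact List.append_cancel_right (List.cons.inj hblock).2
  have hu : s.upper = t.upper := by
    rw [← List.take_append_drop i s.upper, htake, hdrop, List.take_append_drop]
  refine ⟨BlockStack.ext hlower hu, ?_⟩
  rw [← List.length_take_of_le hi, htake, List.length_take_of_le hj]

theorem exists_of_concat_eq_reverse_lower (h : IsAdmissible m s) {A : List ℕ} {x : ℕ}
    (heq : A ++ [x] = s.lower.flatten.reverse) : ∃ j, x = 2 * j ∧ Odd (j + m) := by
  have hflatten : s.lower.flatten = x :: A.reverse := by
    simpa using (congrArg List.reverse heq).symm
  cases hlower : s.lower with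
  | nil => simp [hlower] at hflatten
  | cons b L =>
    obtain ⟨j, c, rfl, hj⟩ := h.head_lower b (hlower ▸ List.mem_cons_self)
    rw [hlower, List.flatten_cons, List.cons_append] at hflatten
    exact ⟨j, (List.cons.inj hflatten).1.symm, hj⟩

theorem eq_nil_of_creaseClosed (h : IsAdmissible m s) {A B : List ℕ}
    (heq : A ++ B = s.lower.flatten.reverse) (hB : CreaseClosed 0 B) : B = [] := by
  by_contra hne
  obtain ⟨X, x, rfl⟩ := (List.eq_nil_or_concat' B).resolve_left hne
  rw [← List.append_assoc] at heq
  obtain ⟨j, rfl, hj⟩ := h.exists_of_concat_eq_reverse_lower heq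
  have hlayers : s.layers = A ++ X ++ 2 * j :: s.upper.flatten := by
    simp [layers, ← heq]
  have hmem : 2 * j + 1 ∈ A ++ X := by
    have := (hB (2 * j) (by omega)).1 (by simp)
    simpa [or_comm] using Or.inr (a := 2 * j + 1 ∈ A) this
  have hinit : A ++ X <+: s.layers := hlayers ▸ List.prefix_append _ _
  have hlt := h.isStack.isLayering.up (2 * j) (h.isStack.mem_iff.1 (hinit.subset hmem))
    (not_descends_two_mul hj)
  have hmem' : 2 * j ∈ A ++ X :=
    (hinit.mem_iff_idxOf_lt_length _).2 (hlt.trans ((hinit.mem_iff_idxOf_lt_length _).1 hmem))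
  have hnodup := h.isStack.nodup
  rw [hlayers] at hnodup
  exact List.disjoint_of_nodup_append hnodup hmem' List.mem_cons_self

end IsAdmissible

theorem exists_mem_family {m : ℕ} {l : List ℕ} (h : IsStack (2 * m + 1) (Descends m) l) :
    ∃ s ∈ family m, s.layers = l := by
  induction m generalizing l with
  | zero => exact ⟨_, Finset.mem_singleton_self _, (List.perm_singleton.1 h.perm).symm⟩
  | succ m ih =>
    have hrev : IsStack (2 * m + 3) (Descends m) l.reverse :=
      h.reverse fun k => by rw [descends_succ, not_not]
    obtain ⟨A, B, C, hl, hB, A', D, hBC, hA', hstack⟩ := hrev.exists_remove_two_faces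
    obtain ⟨s, hs, hlayers⟩ := ih hstack
    have hadm := IsAdmissible.of_mem_family hs
    obtain ⟨hlower, hupper⟩ := hadm.eq_of_append_cons_eq_layers hlayers.symm
    obtain rfl := hadm.eq_nil_of_creaseClosed hlower hA'
    rw [List.append_nil] at hlower
    rw [List.nil_append, hupper] at hBC
    obtain ⟨i, hi, rfl⟩ := IsBlock.exists_eq_flatten_take hadm.isBlock_upper hadm.nodup_upper
      ⟨C, hBC⟩ hB
    obtain rfl : C = (s.upper.drop i).flatten := by
      rw [← List.take_append_drop i s.upper, List.flatten_append] at hBC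
      simpa using hBC
    refine ⟨s.extend m i, Finset.mem_image.2 ⟨⟨s, i⟩, Finset.mem_sigma.2
      ⟨hs, Finset.mem_range.2 (Nat.lt_succ_of_le hi)⟩, rfl⟩, ?_⟩
    rw [← List.reverse_inj, hl, hlower]
    simp [layers, BlockStack.extend]

end BlockStack

/-! ### Counting with Catalan numbers -/

/-- The coefficient of `X ^ n` in the `p`-th power of the Catalan generating function. -/
noncomputable def catalanPowCoeff (n p : ℕ) : ℕ :=
  PowerSeries.coeff n (PowerSeries.catalanSeries ^ p)

theorem catalanPowCoeff_zero (p : ℕ) : catalanPowCoeff 0 p = 1 := by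
  simp [catalanPowCoeff]

theorem catalanPowCoeff_succ (n p : ℕ) :
    catalanPowCoeff (n + 1) p = ∑ k ∈ Finset.range p, catalanPowCoeff n (k + 2) := by
  induction p with
  | zero => simp [catalanPowCoeff, PowerSeries.coeff_one]
  | succ p ih =>
    have hpow : PowerSeries.catalanSeries ^ (p + 1) =
        PowerSeries.catalanSeries ^ (p + 2) * PowerSeries.X + PowerSeries.catalanSeries ^ p := by
      calc PowerSeries.catalanSeries ^ (p + 1)
          = PowerSeries.catalanSeries ^ p *
              (PowerSeries.catalanSeries ^ 2 * PowerSeries.X + 1) := by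
            rw [PowerSeries.catalanSeries_sq_mul_X_add_one, pow_succ]
        _ = _ := by ring
    rw [Finset.sum_range_succ, ← ih, catalanPowCoeff, hpow, map_add,
      PowerSeries.coeff_succ_mul_X, add_comm]
    rfl

theorem catalanPowCoeff_two (n : ℕ) : catalanPowCoeff n 2 = catalan (n + 1) := by
  have h := catalanPowCoeff_succ n 1
  rw [Finset.sum_range_one] at h
  rw [← h, catalanPowCoeff, pow_one, PowerSeries.catalanSeries_coeff]

/-- The number of descendants after `r` generations of a node `(p, q)` in the tree where `(p, q)`
has the children `(q + 1, k + 1)` for `k < p`. A block stack with `a` upper and `b` lower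
blocks is the node `(a + 1, b + 1)` of this tree. -/
def descendantCount : ℕ → ℕ → ℕ → ℕ
  | 0, _, _ => 1
  | r + 1, p, q => ∑ k ∈ Finset.range p, descendantCount r (q + 1) (k + 1)

theorem descendantCount_two_mul (n p q : ℕ) :
    descendantCount (2 * n) p q = catalanPowCoeff n p * catalanPowCoeff n (q + 1) := by
  induction n generalizing p q with
  | zero => rw [catalanPowCoeff_zero, catalanPowCoeff_zero, Nat.mul_zero, descendantCount]
  | succ n ih =>
    rw [Nat.mul_succ, catalanPowCoeff_succ, catalanPowCoeff_succ, Finset.sum_mul_sum]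
    simp only [descendantCount, ih]

theorem descendantCount_two_mul_add_one (n p q : ℕ) :
    descendantCount (2 * n + 1) p q =
      catalanPowCoeff (n + 1) p * catalanPowCoeff n (q + 1) := by
  simp only [descendantCount, descendantCount_two_mul]
  rw [← Finset.mul_sum, ← catalanPowCoeff_succ, mul_comm]

theorem descendantCount_two_one (m : ℕ) :
    descendantCount m 2 1 = catalan (m / 2 + 1) * catalan ((m + 1) / 2 + 1) := by
  rcases Nat.even_or_odd' m with ⟨n, rfl | rfl⟩
  · have h : (2 * n + 1) / 2 = n := by omega
    rw [descendantCount_two_mul, catalanPowCoeff_two, h, Nat.mul_div_cancel_left n two_pos]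
  · have h : (2 * n + 1) / 2 = n := by omega
    have h' : (2 * n + 1 + 1) / 2 = n + 1 := by omega
    rw [descendantCount_two_mul_add_one, catalanPowCoeff_two, catalanPowCoeff_two, h, h', mul_comm]

namespace BlockStack

theorem injOn_extend (m : ℕ) : Set.InjOn (fun p : (_ : BlockStack) × ℕ => p.1.extend m p.2)
    ((family m).sigma fun s => Finset.range (s.upper.length + 1)) := by
  rintro ⟨s, i⟩ hs ⟨t, j⟩ ht h
  rw [Finset.mem_coe, Finset.mem_sigma, Finset.mem_range, Nat.lt_succ_iff] at hs ht
  obtain ⟨rfl, rfl⟩ := (IsAdmissible.of_mem_family hs.1).eq_of_extend_eq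
    (IsAdmissible.of_mem_family ht.1) hs.2 ht.2 h
  rfl

theorem sum_descendantCount (m r : ℕ) :
    ∑ s ∈ family m, descendantCount r (s.upper.length + 1) (s.lower.length + 1) =
      descendantCount (m + r) 2 1 := by
  induction m generalizing r with
  | zero => simp [family]
  | succ m ih =>
    rw [family, Finset.sum_image (injOn_extend m), Finset.sum_sigma, Nat.add_right_comm,
      Nat.add_assoc, ← ih]
    refine Finset.sum_congr rfl fun s _ => ?_
    simp only [extend, List.length_cons, List.length_drop, descendantCount]
    exact Finset.sum_flip fun k => descendantCount r (s.lower.length + 1 + 1) (k + 1)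

theorem card_family (m : ℕ) :
    (family m).card = catalan (m / 2 + 1) * catalan ((m + 1) / 2 + 1) := by
  rw [← descendantCount_two_one, ← Nat.add_zero m, ← sum_descendantCount]
  simp [descendantCount]

end BlockStack

theorem card_isStack_descends (m : ℕ) :
    Nat.card {l // IsStack (2 * m + 1) (Descends m) l} =
      catalan (m / 2 + 1) * catalan ((m + 1) / 2 + 1) := by
  have hinj : Set.InjOn BlockStack.layers (BlockStack.family m) := fun s hs t ht h =>
    (BlockStack.IsAdmissible.of_mem_family hs).eq_of_layers_eq
      (BlockStack.IsAdmissible.of_mem_family ht) h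
  rw [← BlockStack.card_family, ← Finset.card_image_of_injOn hinj]
  refine Nat.subtype_card _ fun l => ?_
  rw [Finset.mem_image]
  refine ⟨?_, BlockStack.exists_mem_family⟩
  rintro ⟨s, hs, rfl⟩
  exact (BlockStack.IsAdmissible.of_mem_family hs).isStack

/-! ### Layer orderings as stacks -/

theorem card_isStack_compl (n : ℕ) {d d' : ℕ → Prop} (hd : ∀ k, d' k ↔ ¬ d k) :
    Nat.card {l // IsStack n d l} = Nat.card {l // IsStack n d' l} := by
  refine Nat.card_congr (List.reverse_involutive.toPerm.subtypeEquiv fun l =>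
    ⟨fun h => h.reverse hd, fun h => ?_⟩)
  rw [← List.reverse_reverse l]
  exact h.reverse fun k => by rw [hd, not_not]

theorem card_isStack_descends_eq (n m : ℕ) :
    Nat.card {l // IsStack n (Descends m) l} = Nat.card {l // IsStack n (Descends 0) l} := by
  induction m with
  | zero => rfl
  | succ m ih => rw [← ih, card_isStack_compl n (descends_succ m)]

/-- Crease `k` goes down under `μ`: the face `k + 1` lies below the face `k`. -/
def GoesDown (μ : ℕ → MV) (k : ℕ) : Prop :=
  (μ k = MV.M ∧ Even k) ∨ (μ k = MV.V ∧ Odd k)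

theorem goesDown_twoAlt : GoesDown twoAlt = Descends 0 := by
  funext k
  simp only [GoesDown, twoAlt, Descends, Nat.even_iff, Nat.odd_iff, eq_iff_iff]
  split_ifs <;> simp only [true_and, false_and, or_false, false_or] <;> omega

section Permutations

variable {n : ℕ} {μ : ℕ → MV} {d : ℕ → Prop} {σ : Equiv.Perm (Fin n)} {l : List ℕ}

theorem validLayerOrdering_iff :
    ValidLayerOrdering n μ σ ↔ IsLayering n (GoesDown μ) (faceVal σ) := by
  constructor
  · rintro ⟨hrel, hnc⟩
    exact ⟨fun k hk hd => (if_pos hd).mp (hrel k hk), fun k hk hd => (if_neg hd).mp (hrel k hk),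
      fun i j hi hj hij => (not_xor _ _).1 (hnc i j hi hj hij)⟩
  · rintro ⟨hdown, hup, hnc⟩
    refine ⟨fun k hk => ?_, fun i j hi hj hij => (not_xor _ _).2 (hnc i j hi hj hij)⟩
    split_ifs with hd
    exacts [hdown k hk hd, hup k hk hd]

/-- The faces listed from bottom to top; `σ` sends a face to its layer, hence the inverse. -/
def toList (σ : Equiv.Perm (Fin n)) : List ℕ :=
  List.ofFn fun k => (σ.symm k : ℕ)

theorem toList_perm (σ : Equiv.Perm (Fin n)) : (toList σ).Perm (List.range n) := by
  have h := Equiv.Perm.ofFn_comp_perm σ.symm fun k : Fin n => (k : ℕ)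
  rwa [List.ofFn_eq_map (f := fun k : Fin n => (k : ℕ)), List.map_coe_finRange_eq_range] at h

theorem idxOf_toList {x : ℕ} (hx : x < n) : (toList σ).idxOf x = faceVal σ x := by
  have hnodup := (toList_perm σ).nodup_iff.2 List.nodup_range
  have hget := hnodup.idxOf_getElem (σ ⟨x, hx⟩) (by simp [toList])
  simpa [toList, faceVal, hx] using hget

theorem isStack_toList_iff : IsStack n d (toList σ) ↔ IsLayering n d (faceVal σ) := by
  have horder : ∀ x < n, ∀ y < n, ((toList σ).idxOf x < (toList σ).idxOf y ↔
      faceVal σ x < faceVal σ y) := fun x hx y hy => by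
    rw [idxOf_toList hx, idxOf_toList hy]
  exact ⟨fun h => h.isLayering.congr horder,
    fun h => ⟨toList_perm σ, h.congr fun x hx y hy => (horder x hx y hy).symm⟩⟩

theorem toList_injective : Function.Injective (toList (n := n)) := fun σ τ h => by
  have h' := List.ofFn_inj.1 h
  exact Equiv.symm_bijective.injective (Equiv.ext fun k => Fin.ext (congrFun h' k))

theorem exists_toList_eq (h : l.Perm (List.range n)) : ∃ σ : Equiv.Perm (Fin n), toList σ = l := by
  have hlen : l.length = n := by rw [h.length_eq, List.length_range]
  have hnodup := h.nodup_iff.2 List.nodup_range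
  let g : Fin n → Fin n := fun k =>
    ⟨l[(k : ℕ)]'(by rw [hlen]; exact k.2), List.mem_range.1 (h.subset (List.getElem_mem _))⟩
  have hg : Function.Injective g := fun i j hij =>
    Fin.ext ((hnodup.getElem_inj_iff).1 (congrArg Fin.val hij))
  refine ⟨(Equiv.ofBijective g (Finite.injective_iff_bijective.1 hg)).symm, ?_⟩
  exact List.ext_getElem (by rw [toList, List.length_ofFn, hlen]) fun i _ _ => by simp [toList, g]

theorem foldCount_eq_card_isStack (n : ℕ) (μ : ℕ → MV) :
    foldCount n μ = Nat.card {l // IsStack n (GoesDown μ) l} := by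
  have hiff : ∀ σ : Equiv.Perm (Fin n),
      ValidLayerOrdering n μ σ ↔ IsStack n (GoesDown μ) (toList σ) := fun σ =>
    validLayerOrdering_iff.trans isStack_toList_iff.symm
  refine Nat.card_congr (Equiv.ofBijective (fun σ => ⟨toList σ.1, (hiff σ).1 σ.2⟩)
    ⟨fun σ τ h => Subtype.ext (toList_injective (Subtype.ext_iff.1 h)), ?_⟩)
  rintro ⟨l, hl⟩
  obtain ⟨σ, rfl⟩ := exists_toList_eq hl.perm
  exact ⟨⟨σ, (hiff σ).2 hl⟩, rfl⟩

end Permutations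

end StampFolding

/-- Theorem: for `m ≥ 1`, the 2-alternating assignment with `m` blocks on the
`1 × (2m+1)` strip folds in `C_{⌊m/2⌋+1} · C_{⌈m/2⌉+1}` ways. -/
theorem stmt5 (m : ℕ) (hm : 1 ≤ m) :
    foldCount (2 * m + 1) twoAlt =
      catalan (m / 2 + 1) * catalan ((m + 1) / 2 + 1) := by
  rw [StampFolding.foldCount_eq_card_isStack, StampFolding.goesDown_twoAlt,
    ← StampFolding.card_isStack_descends_eq _ m, StampFolding.card_isStack_descends]
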